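/- Let T, S : L¹(μ) → L¹(μ) be positive contractions with T ≤ S. If ‖S − T‖ < 1, then ‖Sⁿ − Tⁿ‖ < 1 for every n ≥ 1. -/

import Mathlib

/-!
On the positive cone of `L¹(μ)` the norm is additive. Put `η = 1 - ‖S - T‖ ∈ (0, 1]`, and for
`x ≥ 0` call `‖x‖ - ‖S x‖ ≥ 0` the loss of `x` under `S`; it is monotone in `x`, because
`‖x‖ - ‖y‖ = ‖x - y‖` whenever `0 ≤ y ≤ x`. For `x ≥ 0`, additivity and the definition of `η` give
`‖T^(n+1) x‖ ≥ η ‖T^n x‖ - loss (T^n x) ≥ η ‖T^n x‖ - loss (S^n x)`.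
As the losses of `x, S x, …, S^(n-1) x` telescope to `‖x‖ - ‖S^n x‖`, induction yields
`‖T^n x‖ ≥ η^n ‖x‖ - (‖x‖ - ‖S^n x‖)`, that is, `‖(S^n - T^n) x‖ ≤ (1 - η^n) ‖x‖`
(`norm_pow_add_le`). The norm of a positive operator is determined on the positive cone
(`opNorm_le_of_nonneg`), so `‖S^n - T^n‖ ≤ 1 - η^n < 1`.
-/

open MeasureTheory

section

variable {X : Type*} [MeasurableSpace X] {μ : Measure X}

theorem norm_eq_integral_of_nonneg {f : Lp ℝ 1 μ} (hf : 0 ≤ f) : ‖f‖ = ∫ a, f a ∂μ := by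
  rw [L1.norm_eq_integral_norm]
  refine integral_congr_ae ?_
  filter_upwards [(Lp.coeFn_nonneg f).2 hf] with a ha
  exact Real.norm_of_nonneg ha

/-- The norm of `L¹` is additive on the positive cone, here in subtractive form. -/
theorem norm_sub_of_nonneg_of_le {f g : Lp ℝ 1 μ} (hg : 0 ≤ g) (hgf : g ≤ f) :
    ‖f - g‖ = ‖f‖ - ‖g‖ := by
  rw [norm_eq_integral_of_nonneg hg, norm_eq_integral_of_nonneg (hg.trans hgf),
    norm_eq_integral_of_nonneg (sub_nonneg.2 hgf),
    ← integral_sub (L1.integrable_coeFn f) (L1.integrable_coeFn g)]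
  exact integral_congr_ae (Lp.coeFn_sub f g)

/-- The norm of a positive operator is determined on the positive cone, since `|P f| ≤ P |f|`. -/
theorem opNorm_le_of_nonneg (P : Lp ℝ 1 μ →L[ℝ] Lp ℝ 1 μ) (hP : ∀ x : Lp ℝ 1 μ, 0 ≤ x → 0 ≤ P x)
    {c : ℝ} (hc : 0 ≤ c) (h : ∀ x : Lp ℝ 1 μ, 0 ≤ x → ‖P x‖ ≤ c * ‖x‖) : ‖P‖ ≤ c := by
  refine P.opNorm_le_bound hc fun f => ?_
  have h1 : |P f| ≤ P |f| := by
    refine abs_le'.2 ⟨?_, ?_⟩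
    · have := hP (|f| - f) (sub_nonneg.2 (le_abs_self f))
      rwa [map_sub, sub_nonneg] at this
    · have := hP (|f| - -f) (sub_nonneg.2 (neg_le_abs f))
      rwa [map_sub, map_neg, sub_nonneg] at this
  have h2 : ‖P f‖ ≤ ‖P |f|‖ := norm_le_norm_of_abs_le_abs (h1.trans (le_abs_self _))
  have h3 := h |f| (abs_nonneg f)
  rw [norm_abs_eq_norm] at h3
  exact h2.trans h3

variable {T S : Lp ℝ 1 μ →L[ℝ] Lp ℝ 1 μ}

theorem pow_apply_nonneg (hT : ∀ x : Lp ℝ 1 μ, 0 ≤ x → 0 ≤ T x) (n : ℕ) {x : Lp ℝ 1 μ}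
    (hx : 0 ≤ x) : 0 ≤ (T ^ n) x := by
  induction n with
  | zero => simpa using hx
  | succ n ih => rw [pow_succ']; exact hT _ ih

theorem pow_apply_le_pow_apply (hT : ∀ x : Lp ℝ 1 μ, 0 ≤ x → 0 ≤ T x)
    (hS : ∀ x : Lp ℝ 1 μ, 0 ≤ x → 0 ≤ S x) (hTS : ∀ x : Lp ℝ 1 μ, 0 ≤ x → 0 ≤ S x - T x)
    (n : ℕ) {x : Lp ℝ 1 μ} (hx : 0 ≤ x) : (T ^ n) x ≤ (S ^ n) x := by
  induction n with
  | zero => simp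
  | succ n ih =>
    rw [pow_succ', pow_succ']
    have h1 := hS _ (sub_nonneg.2 ih)
    rw [map_sub, sub_nonneg] at h1
    exact (sub_nonneg.1 (hTS _ (pow_apply_nonneg hT n hx))).trans h1

/-- The loss `‖x‖ - ‖S x‖` of a positive contraction is monotone on the positive cone. -/
theorem loss_mono (hS : ∀ x : Lp ℝ 1 μ, 0 ≤ x → 0 ≤ S x) (hSnorm : ‖S‖ ≤ 1)
    {x y : Lp ℝ 1 μ} (hy : 0 ≤ y) (hyx : y ≤ x) : ‖y‖ - ‖S y‖ ≤ ‖x‖ - ‖S x‖ := by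
  have h1 := S.le_of_opNorm_le hSnorm (x - y)
  have h2 := hS _ (sub_nonneg.2 hyx)
  rw [map_sub, sub_nonneg] at h2
  rw [map_sub, norm_sub_of_nonneg_of_le (hS y hy) h2, norm_sub_of_nonneg_of_le hy hyx] at h1
  linarith

/-- The quantitative core: on the positive cone,
`‖S^n x‖ - ‖T^n x‖ ≤ (1 - (1 - ‖S - T‖)^n) ‖x‖`. -/
theorem norm_pow_add_le (hT : ∀ x : Lp ℝ 1 μ, 0 ≤ x → 0 ≤ T x)
    (hS : ∀ x : Lp ℝ 1 μ, 0 ≤ x → 0 ≤ S x) (hSnorm : ‖S‖ ≤ 1)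
    (hTS : ∀ x : Lp ℝ 1 μ, 0 ≤ x → 0 ≤ S x - T x) (h : ‖S - T‖ < 1)
    (n : ℕ) {x : Lp ℝ 1 μ} (hx : 0 ≤ x) :
    ‖(S ^ n) x‖ + (1 - ‖S - T‖) ^ n * ‖x‖ ≤ ‖(T ^ n) x‖ + ‖x‖ := by
  induction n with
  | zero => simp
  | succ n ih =>
    set u := (T ^ n) x
    set v := (S ^ n) x
    have hu : 0 ≤ u := pow_apply_nonneg hT n hx
    have huv : u ≤ v := pow_apply_le_pow_apply hT hS hTS n hx
    have hv0 : 0 ≤ v := hu.trans huv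
    have hT1 : (T ^ (n + 1)) x = T u := by rw [pow_succ']; rfl
    have hS1 : (S ^ (n + 1)) x = S v := by rw [pow_succ']; rfl
    have h1 : ‖S u‖ - ‖T u‖ ≤ ‖S - T‖ * ‖u‖ := by
      rw [← norm_sub_of_nonneg_of_le (hT u hu) (sub_nonneg.1 (hTS u hu))]
      exact (S - T).le_opNorm u
    have h2 := loss_mono hS hSnorm hu huv
    -- Total loss up to step `n` is nonnegative, so multiplying it by `1 - ‖S - T‖` decreases it.
    have h3 : ‖v‖ ≤ ‖x‖ := by
      have h4 : ‖S ^ n‖ ≤ 1 := by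
        rcases Nat.eq_zero_or_pos n with rfl | hn
        · rw [pow_zero]; exact ContinuousLinearMap.norm_id_le
        · exact (norm_pow_le' S hn).trans (pow_le_one₀ (norm_nonneg S) hSnorm)
      exact ((S ^ n).le_of_opNorm_le h4 x).trans_eq (one_mul _)
    rw [hT1, hS1, pow_succ]
    have h5 := norm_nonneg (S - T)
    nlinarith [mul_le_mul_of_nonneg_left ih (sub_nonneg.2 h.le), mul_nonneg h5 (sub_nonneg.2 h3)]

end


/-- Zaharopol's theorem: if `T ≤ S` are positive contractions on the real `L¹`-space
and `‖S - T‖ < 1`, then `‖Sⁿ - Tⁿ‖ < 1` for every `n ≥ 1`. -/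
theorem norm_pow_sub_pow_lt_one_of_norm_sub_lt_one
    {X : Type*} [MeasurableSpace X] (μ : Measure X)
    (T S : Lp ℝ 1 μ →L[ℝ] Lp ℝ 1 μ)
    (hT : ∀ x : Lp ℝ 1 μ, 0 ≤ x → 0 ≤ T x) (hTnorm : ‖T‖ ≤ 1)
    (hS : ∀ x : Lp ℝ 1 μ, 0 ≤ x → 0 ≤ S x) (hSnorm : ‖S‖ ≤ 1)
    (hTS : ∀ x : Lp ℝ 1 μ, 0 ≤ x → 0 ≤ S x - T x)
    (h : ‖S - T‖ < 1) :
    ∀ n : ℕ, 1 ≤ n → ‖S ^ n - T ^ n‖ < 1 := by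
  intro n _
  have hη : 0 < (1 - ‖S - T‖) ^ n := pow_pos (sub_pos.2 h) n
  have hη1 : (1 - ‖S - T‖) ^ n ≤ 1 :=
    pow_le_one₀ (sub_nonneg.2 h.le) (sub_le_self 1 (norm_nonneg _))
  have key : ‖S ^ n - T ^ n‖ ≤ 1 - (1 - ‖S - T‖) ^ n := by
    refine opNorm_le_of_nonneg _ (fun x hx => ?_) (sub_nonneg.2 hη1) fun x hx => ?_
    · exact sub_nonneg.2 (pow_apply_le_pow_apply hT hS hTS n hx)
    · rw [sub_apply, norm_sub_of_nonneg_of_le (pow_apply_nonneg hT n hx)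
        (pow_apply_le_pow_apply hT hS hTS n hx)]
      have := norm_pow_add_le hT hS hSnorm hTS h n hx
      linarith
  linarith
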